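/- For every β ≥ 0, c ≥ 0 and N ∈ ℕ, the quenched pressure is bounded above by the annealed pressure: p_N(β,c) ≤ 𝒫(β,c). -/

import Mathlib

open MeasureTheory Filter

/-- Poisson probability mass function with parameter `lam`. -/
noncomputable def poissonPMF (lam : ℝ) (k : ℕ) : ℝ :=
  Real.exp (-lam) * lam ^ k / (Nat.factorial k)

/-- Potts Hamiltonian `H_N(σ, J) = Σ_{i,j} J_{ij} δ(σ_i, σ_j)`. -/
noncomputable def potts.H (q N : ℕ) (σ : Fin N → Fin q) (J : Fin N → Fin N → ℝ) : ℝ :=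
  ∑ i, ∑ j, J i j * (if σ i = σ j then (1 : ℝ) else 0)

/-- Partition function `Z_N(J)`. -/
noncomputable def potts.Z (q N : ℕ) (J : Fin N → Fin N → ℝ) : ℝ :=
  ∑ σ : Fin N → Fin q, Real.exp (- potts.H q N σ J)

/-- Expectation over the Poissonian disorder: the entries `J_{ij}` are independent
Poisson random variables with means `c_{ij} / (2N)`. -/
noncomputable def potts.E (N : ℕ) (c : Fin N → Fin N → ℝ)
    (g : (Fin N → Fin N → ℕ) → ℝ) : ℝ :=
  ∑' J : Fin N → Fin N → ℕ,
    (∏ i, ∏ j, poissonPMF (c i j / (2 * N)) (J i j)) * g J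

/-- Quenched pressure for a general nonnegative connectivity matrix `c`. -/
noncomputable def potts.pmat (q N : ℕ) (β : ℝ) (c : Fin N → Fin N → ℝ) : ℝ :=
  potts.E N c (fun J => (1 / N) * Real.log (potts.Z q N (fun i j => β * (J i j : ℝ))))

/-- Quenched pressure for the constant connectivity matrix `c_{ij} ≡ c`. -/
noncomputable def potts.p (q N : ℕ) (β c : ℝ) : ℝ :=
  potts.pmat q N β (fun _ _ => c)

/-- Annealed pressure `𝒫(β, c) = ln q + (c/2) ln(1 - (1 - e^{-β})/q)`. -/
noncomputable def potts.annealed (q : ℕ) (β c : ℝ) : ℝ :=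
  Real.log q + (c / 2) * Real.log (1 - (1 - Real.exp (-β)) / q)

/-!
Let `r = 1 - (1 - e^{-β}) / q` be the average weight of an edge between two independent uniform
spins, and let `|J|` be the total number of edges. The plain Jensen bound `𝔼 ln Z ≤ ln 𝔼 Z` is too
weak, because `|J|` fluctuates; one compares `Z` with `r ^ |J|` first. The mean of `ln (r ^ |J|)` is
exactly `N (c / 2) ln r`, and the Poisson generating function gives
`𝔼[Z r^{-|J|}] = ∑_σ exp (c / (2N) ∑_{ij} (e^{-β δ(σ_i, σ_j)} / r - 1))`. Every exponent is
nonpositive: by Cauchy–Schwarz, at least a fraction `1 / q` of all pairs of sites is monochromatic.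
Hence `𝔼[Z r^{-|J|}] ≤ q ^ N`, and Jensen's inequality for `Z r^{-|J|}` gives the claim.
-/

open ProbabilityTheory (poissonMeasure poissonMeasure_real_singleton integrable_poissonMeasure_iff
  hasSum_integral_poissonMeasure)
open scoped NNReal

theorem integral_pos_of_ae_pos {Ω : Type*} [MeasurableSpace Ω] {μ : Measure Ω} [NeZero μ]
    {f : Ω → ℝ} (hpos : ∀ᵐ ω ∂μ, 0 < f ω) (hf : Integrable f μ) : 0 < ∫ ω, f ω ∂μ := by
  have hsupport : Function.support f =ᵐ[μ] Set.univ :=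
    eventuallyEq_univ.2 (hpos.mono fun ω hω => hω.ne')
  rw [integral_pos_iff_support_of_nonneg_ae (hpos.mono fun ω hω => hω.le) hf,
    measure_congr hsupport]
  exact Measure.measure_univ_pos.2 (NeZero.ne μ)

theorem integral_log_le_log_integral {Ω : Type*} [MeasurableSpace Ω] {μ : Measure Ω}
    [IsProbabilityMeasure μ] {f : Ω → ℝ} (hpos : ∀ᵐ ω ∂μ, 0 < f ω) (hf : Integrable f μ)
    (hlog : Integrable (fun ω => Real.log (f ω)) μ) :
    ∫ ω, Real.log (f ω) ∂μ ≤ Real.log (∫ ω, f ω ∂μ) := by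
  set m := ∫ ω, f ω ∂μ with hm_def
  have hm : 0 < m := integral_pos_of_ae_pos hpos hf
  have htangent : ∀ᵐ ω ∂μ, Real.log (f ω) ≤ f ω / m + (Real.log m - 1) := by
    filter_upwards [hpos] with ω hω
    have := Real.log_le_sub_one_of_pos (div_pos hω hm)
    rw [Real.log_div hω.ne' hm.ne'] at this
    linarith
  calc ∫ ω, Real.log (f ω) ∂μ
      ≤ ∫ ω, (f ω / m + (Real.log m - 1)) ∂μ :=
        integral_mono_ae hlog ((hf.div_const m).add (integrable_const _)) htangent
    _ = m / m + (Real.log m - 1) := by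
        rw [integral_add (hf.div_const m) (integrable_const _), integral_div, ← hm_def]
        simp
    _ = Real.log m := by rw [div_self hm.ne']; ring

theorem card_sq_le_card_mul_sum_ite_eq {ι α : Type*} [Fintype ι] [Fintype α] [DecidableEq α]
    (σ : ι → α) :
    (Fintype.card ι : ℝ) ^ 2 ≤ Fintype.card α * ∑ i, ∑ j, if σ i = σ j then (1 : ℝ) else 0 := by
  have hcard : ∑ a, ∑ i, (if σ i = a then (1 : ℝ) else 0) = Fintype.card ι := by
    rw [Finset.sum_comm]
    simp
  have hpairs : ∑ a, (∑ i, if σ i = a then (1 : ℝ) else 0) ^ 2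
      = ∑ i, ∑ j, if σ i = σ j then (1 : ℝ) else 0 := by
    simp only [sq, Finset.sum_mul_sum]
    rw [Finset.sum_comm]
    refine Finset.sum_congr rfl fun i _ => ?_
    rw [Finset.sum_comm]
    simp [eq_comm]
  rw [← hcard, ← hpairs]
  exact sq_sum_le_card_mul_sum_sq

theorem hasSum_poissonPMF_mul_pow (lam x : ℝ) :
    HasSum (fun k => poissonPMF lam k * x ^ k) (Real.exp (lam * (x - 1))) := by
  have hseries := (NormedSpace.expSeries_div_hasSum_exp (lam * x)).mul_left (Real.exp (-lam))
  rw [← Real.exp_eq_exp_ℝ, ← Real.exp_add] at hseries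
  have hterm (k : ℕ) :
      Real.exp (-lam) * ((lam * x) ^ k / k.factorial) = poissonPMF lam k * x ^ k := by
    rw [poissonPMF, mul_pow]
    ring
  have hexponent : -lam + lam * x = lam * (x - 1) := by ring
  simpa only [hterm, hexponent] using hseries

theorem hasSum_poissonPMF_mul_natCast (lam : ℝ) :
    HasSum (fun k : ℕ => poissonPMF lam k * k) lam := by
  have htotal : HasSum (poissonPMF lam) 1 := by simpa using hasSum_poissonPMF_mul_pow lam 1
  have hshift (k : ℕ) : poissonPMF lam (k + 1) * ((k + 1 : ℕ) : ℝ) = lam * poissonPMF lam k := by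
    rw [poissonPMF, poissonPMF, Nat.factorial_succ]
    push_cast
    field_simp
    ring
  rw [← hasSum_nat_add_iff' 1]
  simpa only [hshift, Finset.sum_range_one, Nat.cast_zero, mul_zero, sub_zero, mul_one]
    using htotal.mul_left lam

section PoissonMoments

variable (lam : ℝ≥0)

theorem poissonMeasure_real_singleton_eq_poissonPMF (k : ℕ) :
    (poissonMeasure lam).real {k} = poissonPMF lam k :=
  poissonMeasure_real_singleton lam k

theorem integrable_pow_poissonMeasure (x : ℝ) :
    Integrable (fun k : ℕ => x ^ k) (poissonMeasure lam) := by
  rw [integrable_poissonMeasure_iff]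
  simpa only [norm_pow, poissonPMF] using (hasSum_poissonPMF_mul_pow lam ‖x‖).summable

theorem integral_pow_poissonMeasure (x : ℝ) :
    ∫ k : ℕ, x ^ k ∂poissonMeasure lam = Real.exp (lam * (x - 1)) :=
  (hasSum_integral_poissonMeasure (integrable_pow_poissonMeasure lam x)).unique
    (hasSum_poissonPMF_mul_pow lam x)

theorem integrable_natCast_poissonMeasure :
    Integrable (fun k : ℕ => (k : ℝ)) (poissonMeasure lam) := by
  rw [integrable_poissonMeasure_iff]
  simpa only [Real.norm_natCast, poissonPMF] using (hasSum_poissonPMF_mul_natCast lam).summable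

theorem integral_natCast_poissonMeasure : ∫ k : ℕ, (k : ℝ) ∂poissonMeasure lam = lam :=
  (hasSum_integral_poissonMeasure (integrable_natCast_poissonMeasure lam)).unique
    (hasSum_poissonPMF_mul_natCast lam)

end PoissonMoments

/-- The law of a random matrix with independent Poisson entries of means `lam i j`. It is a nested
product measure, so that its samples are matrices in curried form, as in `potts.E`. -/
noncomputable def poissonMatrixMeasure {ι κ : Type*} [Fintype ι] [Fintype κ] (lam : ι → κ → ℝ≥0) :
    Measure (ι → κ → ℕ) :=
  Measure.pi fun i => Measure.pi fun j => poissonMeasure (lam i j)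

namespace poissonMatrixMeasure

variable {ι κ : Type*} [Fintype ι] [Fintype κ] (lam : ι → κ → ℝ≥0)

instance : IsProbabilityMeasure (poissonMatrixMeasure lam) :=
  inferInstanceAs (IsProbabilityMeasure (Measure.pi _))

theorem real_singleton (J : ι → κ → ℕ) :
    (poissonMatrixMeasure lam).real {J} = ∏ i, ∏ j, poissonPMF (lam i j) (J i j) := by
  simp [poissonMatrixMeasure, measureReal_def, ENNReal.toReal_prod,
    ← poissonMeasure_real_singleton_eq_poissonPMF]

theorem integral_eq_tsum (g : (ι → κ → ℕ) → ℝ) :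
    ∫ J, g J ∂poissonMatrixMeasure lam
      = ∑' J, (∏ i, ∏ j, poissonPMF (lam i j) (J i j)) * g J := by
  simp_rw [← real_singleton]
  nth_rewrite 1 [← Measure.sum_smul_dirac (poissonMatrixMeasure lam)]
  exact integral_sum_dirac fun J => measure_ne_top _ _

theorem integrable_prod_pow (x : ι → κ → ℝ) :
    Integrable (fun J => ∏ i, ∏ j, x i j ^ J i j) (poissonMatrixMeasure lam) :=
  Integrable.fintype_prod (f := fun i (y : κ → ℕ) => ∏ j, x i j ^ y j) fun i =>
    Integrable.fintype_prod (f := fun j k => x i j ^ k) fun j =>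
      integrable_pow_poissonMeasure (lam i j) (x i j)

theorem integral_prod_pow (x : ι → κ → ℝ) :
    ∫ J, ∏ i, ∏ j, x i j ^ J i j ∂poissonMatrixMeasure lam
      = Real.exp (∑ i, ∑ j, lam i j * (x i j - 1)) := by
  rw [poissonMatrixMeasure,
    integral_fintype_prod_eq_prod (f := fun i (y : κ → ℕ) => ∏ j, x i j ^ y j)]
  rw [Real.exp_sum]
  refine Finset.prod_congr rfl fun i _ => ?_
  rw [integral_fintype_prod_eq_prod (f := fun j (k : ℕ) => x i j ^ k), Real.exp_sum]
  simp_rw [integral_pow_poissonMeasure]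

theorem measurePreserving_entry (i : ι) (j : κ) :
    MeasurePreserving (fun J : ι → κ → ℕ => J i j) (poissonMatrixMeasure lam)
      (poissonMeasure (lam i j)) :=
  (measurePreserving_eval (fun j => poissonMeasure (lam i j)) j).comp
    (measurePreserving_eval (fun i => Measure.pi fun j => poissonMeasure (lam i j)) i)

theorem integrable_entry (i : ι) (j : κ) :
    Integrable (fun J => (J i j : ℝ)) (poissonMatrixMeasure lam) :=
  (measurePreserving_entry lam i j).integrable_comp_of_integrable
    (integrable_natCast_poissonMeasure (lam i j))

theorem integral_entry (i : ι) (j : κ) :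
    ∫ J, (J i j : ℝ) ∂poissonMatrixMeasure lam = lam i j := by
  have hentry := measurePreserving_entry lam i j
  rw [← integral_natCast_poissonMeasure (lam i j), ← hentry.map_eq,
    integral_map hentry.aemeasurable .of_discrete]

end poissonMatrixMeasure

namespace potts

open poissonMatrixMeasure

theorem E_eq_integral {N : ℕ} {c : Fin N → Fin N → ℝ} (hc : ∀ i j, 0 ≤ c i j)
    (g : (Fin N → Fin N → ℕ) → ℝ) :
    E N c g = ∫ J, g J ∂poissonMatrixMeasure fun i j => (c i j / (2 * N)).toNNReal := by
  have hmean (i j) : ((c i j / (2 * N)).toNNReal : ℝ) = c i j / (2 * N) :=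
    Real.coe_toNNReal _ (div_nonneg (hc i j) (by positivity))
  rw [integral_eq_tsum]
  simp_rw [hmean, E]

/-- The total number of edges of the multigraph with adjacency counts `J`. -/
def numEdges {N : ℕ} (J : Fin N → Fin N → ℕ) : ℕ :=
  ∑ i, ∑ j, J i j

/-- The Boltzmann factor `e^{-β δ(σ_i, σ_j)}` which a single edge from `i` to `j` contributes to
the Gibbs weight of the configuration `σ`. -/
noncomputable def edgeFactor {q N : ℕ} (β : ℝ) (σ : Fin N → Fin q) (i j : Fin N) : ℝ :=
  if σ i = σ j then Real.exp (-β) else 1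

/-- The mean `1 - (1 - e^{-β}) / q` of the Boltzmann factor of an edge whose endpoints carry
independent uniform spins; the annealed pressure is `ln q + (c / 2) ln (meanEdgeFactor q β)`. -/
noncomputable def meanEdgeFactor (q : ℕ) (β : ℝ) : ℝ :=
  1 - (1 - Real.exp (-β)) / q

section Deterministic

variable {q N : ℕ} {β : ℝ}

theorem meanEdgeFactor_pos (hq : 0 < q) : 0 < meanEdgeFactor q β := by
  have hq1 : (1 : ℝ) ≤ q := by exact_mod_cast hq
  rw [meanEdgeFactor, sub_pos, div_lt_one (by linarith)]
  linarith [Real.exp_pos (-β)]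

theorem sum_edgeFactor_le (hq : 0 < q) (hβ : 0 ≤ β) (σ : Fin N → Fin q) :
    ∑ i, ∑ j, edgeFactor β σ i j ≤ N ^ 2 * meanEdgeFactor q β := by
  have hq0 : (0 : ℝ) < q := by exact_mod_cast hq
  have hexp : 0 ≤ 1 - Real.exp (-β) := sub_nonneg.2 (Real.exp_le_one_iff.2 (neg_nonpos.2 hβ))
  have hfactor (i j) :
      edgeFactor β σ i j = 1 - (1 - Real.exp (-β)) * if σ i = σ j then (1 : ℝ) else 0 := by
    rw [edgeFactor]
    split_ifs <;> ring
  have hpairs : (N : ℝ) ^ 2 / q ≤ ∑ i, ∑ j, if σ i = σ j then (1 : ℝ) else 0 := by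
    rw [div_le_iff₀' hq0]
    simpa using card_sq_le_card_mul_sum_ite_eq σ
  calc ∑ i, ∑ j, edgeFactor β σ i j
      = N ^ 2 - (1 - Real.exp (-β)) * ∑ i, ∑ j, if σ i = σ j then (1 : ℝ) else 0 := by
        simp_rw [hfactor, Finset.sum_sub_distrib, ← Finset.mul_sum]
        simp [sq]
    _ ≤ N ^ 2 - (1 - Real.exp (-β)) * (N ^ 2 / q) := by gcongr
    _ = N ^ 2 * meanEdgeFactor q β := by rw [meanEdgeFactor]; ring

theorem exp_neg_H_eq_prod_edgeFactor_pow (σ : Fin N → Fin q) (J : Fin N → Fin N → ℕ) :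
    Real.exp (-H q N σ fun i j => β * J i j) = ∏ i, ∏ j, edgeFactor β σ i j ^ J i j := by
  simp_rw [H, ← Finset.sum_neg_distrib, Real.exp_sum]
  refine Finset.prod_congr rfl fun i _ => Finset.prod_congr rfl fun j _ => ?_
  rw [edgeFactor]
  split_ifs
  · rw [← Real.exp_nat_mul]
    ring_nf
  · simp

theorem H_nonneg {J : Fin N → Fin N → ℝ} (hJ : ∀ i j, 0 ≤ J i j) (σ : Fin N → Fin q) :
    0 ≤ H q N σ J :=
  Finset.sum_nonneg fun i _ => Finset.sum_nonneg fun j _ =>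
    mul_nonneg (hJ i j) (by split_ifs <;> norm_num)

theorem H_le_sum {J : Fin N → Fin N → ℝ} (hJ : ∀ i j, 0 ≤ J i j) (σ : Fin N → Fin q) :
    H q N σ J ≤ ∑ i, ∑ j, J i j :=
  Finset.sum_le_sum fun i _ => Finset.sum_le_sum fun j _ =>
    mul_le_of_le_one_right (hJ i j) (by split_ifs <;> norm_num)

theorem Z_pos (hq : 0 < q) (J : Fin N → Fin N → ℝ) : 0 < Z q N J := by
  have : NeZero q := ⟨hq.ne'⟩
  exact Finset.sum_pos (fun σ _ => Real.exp_pos _) Finset.univ_nonempty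

theorem abs_log_Z_le (hq : 0 < q) {J : Fin N → Fin N → ℝ} (hJ : ∀ i j, 0 ≤ J i j) :
    |Real.log (Z q N J)| ≤ N * Real.log q + ∑ i, ∑ j, J i j := by
  have hupper : Real.log (Z q N J) ≤ N * Real.log q := by
    rw [← Real.log_pow]
    refine Real.log_le_log (Z_pos hq J) ?_
    calc Z q N J ≤ ∑ _σ : Fin N → Fin q, (1 : ℝ) :=
          Finset.sum_le_sum fun σ _ => Real.exp_le_one_iff.2 (neg_nonpos.2 (H_nonneg hJ σ))
      _ = (q : ℝ) ^ N := by simp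
  have hlower : -∑ i, ∑ j, J i j ≤ Real.log (Z q N J) := by
    rw [Real.le_log_iff_exp_le (Z_pos hq J)]
    let σ₀ : Fin N → Fin q := fun _ => ⟨0, hq⟩
    calc Real.exp (-∑ i, ∑ j, J i j) ≤ Real.exp (-H q N σ₀ J) :=
          Real.exp_le_exp.2 (neg_le_neg (H_le_sum hJ σ₀))
      _ ≤ Z q N J := Finset.single_le_sum (f := fun σ => Real.exp (-H q N σ J))
          (fun σ _ => (Real.exp_pos _).le) (Finset.mem_univ σ₀)
  have hsum : 0 ≤ ∑ i, ∑ j, J i j :=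
    Finset.sum_nonneg fun i _ => Finset.sum_nonneg fun j _ => hJ i j
  have hlog : 0 ≤ N * Real.log q := mul_nonneg N.cast_nonneg (Real.log_natCast_nonneg q)
  exact abs_le.2 ⟨by linarith, by linarith⟩

theorem Z_mul_pow_numEdges (t : ℝ) (J : Fin N → Fin N → ℕ) :
    Z q N (fun i j => β * J i j) * t ^ numEdges J
      = ∑ σ : Fin N → Fin q, ∏ i, ∏ j, (t * edgeFactor β σ i j) ^ J i j := by
  simp_rw [Z, exp_neg_H_eq_prod_edgeFactor_pow, Finset.sum_mul, mul_pow, Finset.prod_mul_distrib,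
    Finset.prod_pow_eq_pow_sum, numEdges, mul_comm]

end Deterministic

section Disorder

variable {q N : ℕ} {β : ℝ} (lam : Fin N → Fin N → ℝ≥0)

theorem integrable_numEdges :
    Integrable (fun J => (numEdges J : ℝ)) (poissonMatrixMeasure lam) := by
  simp_rw [numEdges, Nat.cast_sum]
  exact integrable_finsetSum _ fun i _ => integrable_finsetSum _ fun j _ =>
    integrable_entry lam i j

theorem integral_numEdges :
    ∫ J, (numEdges J : ℝ) ∂poissonMatrixMeasure lam = ∑ i, ∑ j, (lam i j : ℝ) := by
  simp_rw [numEdges, Nat.cast_sum]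
  rw [integral_finsetSum _ fun i _ => integrable_finsetSum _ fun j _ => integrable_entry lam i j]
  refine Finset.sum_congr rfl fun i _ => ?_
  rw [integral_finsetSum _ fun j _ => integrable_entry lam i j]
  simp_rw [integral_entry]

theorem integrable_log_Z (hq : 0 < q) (hβ : 0 ≤ β) :
    Integrable (fun J => Real.log (Z q N fun i j => β * J i j)) (poissonMatrixMeasure lam) := by
  refine Integrable.mono' (g := fun J => N * Real.log q + β * numEdges J)
    ((integrable_const _).add ((integrable_numEdges lam).const_mul β)) .of_discrete
    (ae_of_all _ fun J => ?_)
  simpa [numEdges, Finset.mul_sum] using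
    abs_log_Z_le (J := fun i j => β * J i j) hq fun i j => mul_nonneg hβ (J i j).cast_nonneg

theorem integrable_Z_mul_pow_numEdges (t : ℝ) :
    Integrable (fun J => Z q N (fun i j => β * J i j) * t ^ numEdges J)
      (poissonMatrixMeasure lam) := by
  simp_rw [Z_mul_pow_numEdges]
  exact integrable_finsetSum _ fun σ _ => integrable_prod_pow lam _

theorem integral_Z_mul_pow_numEdges (t : ℝ) :
    ∫ J, Z q N (fun i j => β * J i j) * t ^ numEdges J ∂poissonMatrixMeasure lam
      = ∑ σ : Fin N → Fin q, Real.exp (∑ i, ∑ j, lam i j * (t * edgeFactor β σ i j - 1)) := by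
  simp_rw [Z_mul_pow_numEdges]
  rw [integral_finsetSum _ fun σ _ => integrable_prod_pow lam _]
  simp_rw [integral_prod_pow]

end Disorder

section ConstantMean

variable {q N : ℕ} {β : ℝ} (lam : ℝ≥0)

theorem integral_Z_mul_inv_meanEdgeFactor_pow_le (hq : 0 < q) (hβ : 0 ≤ β) :
    ∫ J, Z q N (fun i j => β * J i j) * (meanEdgeFactor q β)⁻¹ ^ numEdges J
      ∂poissonMatrixMeasure (fun _ _ => lam) ≤ (q : ℝ) ^ N := by
  have hexponent (σ : Fin N → Fin q) :
      ∑ i, ∑ j, lam * ((meanEdgeFactor q β)⁻¹ * edgeFactor β σ i j - 1) ≤ 0 := by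
    have hsum : (meanEdgeFactor q β)⁻¹ * ∑ i, ∑ j, edgeFactor β σ i j ≤ (N : ℝ) ^ 2 := by
      rw [inv_mul_le_iff₀' (meanEdgeFactor_pos hq)]
      exact sum_edgeFactor_le hq hβ σ
    simp_rw [← Finset.mul_sum, Finset.sum_sub_distrib, ← Finset.mul_sum]
    refine mul_nonpos_of_nonneg_of_nonpos lam.coe_nonneg ?_
    simpa [sq] using hsum
  calc ∫ J, Z q N (fun i j => β * J i j) * (meanEdgeFactor q β)⁻¹ ^ numEdges J
        ∂poissonMatrixMeasure (fun _ _ => lam)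
      = ∑ σ : Fin N → Fin q,
          Real.exp (∑ i, ∑ j, lam * ((meanEdgeFactor q β)⁻¹ * edgeFactor β σ i j - 1)) :=
        integral_Z_mul_pow_numEdges _ _
    _ ≤ ∑ _σ : Fin N → Fin q, (1 : ℝ) :=
        Finset.sum_le_sum fun σ _ => Real.exp_le_one_iff.2 (hexponent σ)
    _ = (q : ℝ) ^ N := by simp

theorem integral_log_Z_le (hq : 0 < q) (hβ : 0 ≤ β) :
    ∫ J, Real.log (Z q N fun i j => β * J i j) ∂poissonMatrixMeasure (fun _ _ => lam)
      ≤ N * Real.log q + N ^ 2 * lam * Real.log (meanEdgeFactor q β) := by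
  set μ := poissonMatrixMeasure fun _ _ : Fin N => lam
  set r := meanEdgeFactor q β
  have hr : 0 < r := meanEdgeFactor_pos hq
  have hpos (J : Fin N → Fin N → ℕ) :
      0 < Z q N (fun i j => β * J i j) * r⁻¹ ^ numEdges J :=
    mul_pos (Z_pos hq _) (pow_pos (inv_pos.2 hr) _)
  have hlog_ratio (J : Fin N → Fin N → ℕ) :
      Real.log (Z q N (fun i j => β * J i j) * r⁻¹ ^ numEdges J)
        = Real.log (Z q N fun i j => β * J i j) - numEdges J * Real.log r := by
    rw [Real.log_mul (Z_pos hq _).ne' (pow_pos (inv_pos.2 hr) _).ne', Real.log_pow, Real.log_inv]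
    ring
  have hratio := integrable_Z_mul_pow_numEdges (q := q) (β := β) (fun _ _ : Fin N => lam) r⁻¹
  have hlogZ := integrable_log_Z (fun _ _ : Fin N => lam) hq hβ
  have hedges := (integrable_numEdges fun _ _ : Fin N => lam).mul_const (Real.log r)
  have hjensen : ∫ J, Real.log (Z q N (fun i j => β * J i j) * r⁻¹ ^ numEdges J) ∂μ
      ≤ N * Real.log q := by
    calc ∫ J, Real.log (Z q N (fun i j => β * J i j) * r⁻¹ ^ numEdges J) ∂μ
        ≤ Real.log (∫ J, Z q N (fun i j => β * J i j) * r⁻¹ ^ numEdges J ∂μ) := by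
          refine integral_log_le_log_integral (ae_of_all _ hpos) hratio ?_
          simp_rw [hlog_ratio]
          exact hlogZ.sub hedges
      _ ≤ Real.log ((q : ℝ) ^ N) :=
          Real.log_le_log (integral_pos_of_ae_pos (ae_of_all _ hpos) hratio)
            (integral_Z_mul_inv_meanEdgeFactor_pow_le lam hq hβ)
      _ = N * Real.log q := Real.log_pow _ _
  simp_rw [hlog_ratio] at hjensen
  rw [integral_sub hlogZ hedges, integral_mul_const, integral_numEdges] at hjensen
  simp only [Finset.sum_const, Finset.card_univ, Fintype.card_fin, nsmul_eq_mul] at hjensen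
  linarith

end ConstantMean

end potts

/-- the quenched pressure is bounded above by the annealed
pressure. -/
theorem statement4 (q N : ℕ) (hq : 2 ≤ q) (hN : 0 < N) (β c : ℝ)
    (hβ : 0 ≤ β) (hc : 0 ≤ c) :
    potts.p q N β c ≤ potts.annealed q β c := by
  have hN0 : (N : ℝ) ≠ 0 := Nat.cast_ne_zero.2 hN.ne'
  have hmean : ((c / (2 * N)).toNNReal : ℝ) = c / (2 * N) := Real.coe_toNNReal _ (by positivity)
  have hlogZ := potts.integral_log_Z_le (N := N) (c / (2 * N)).toNNReal (by omega : 0 < q) hβ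
  rw [potts.p, potts.pmat, potts.E_eq_integral fun _ _ => hc, integral_const_mul]
  calc 1 / (N : ℝ) * ∫ J, Real.log (potts.Z q N fun i j => β * J i j)
        ∂poissonMatrixMeasure (fun _ _ => (c / (2 * N)).toNNReal)
      ≤ 1 / N * (N * Real.log q + N ^ 2 * (c / (2 * N)) * Real.log (potts.meanEdgeFactor q β)) := by
        rw [hmean] at hlogZ
        gcongr
    _ = potts.annealed q β c := by
        rw [potts.annealed, potts.meanEdgeFactor]
        field_simp [hN0]
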